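/- Let M be an n×n integer matrix and let H = { x ∈ (ℂˣ)ⁿ : x^M = x }, a closed subgroup of (ℂˣ)ⁿ with the subspace topology. Then the connected component of the identity in H is exactly e(V), where V = { v ∈ ℂⁿ : M v = v } is the kernel of M − I on ℂⁿ. (This is the assertion in the proof of Proposition 2.6 that (𝒪_ℂ^{λ_w})° is an algebraic torus, namely the image under the exponential map of the λ_w-invariants in the Lie algebra of 𝒪_ℂ.) -/

import Mathlib

open scoped BigOperators

/-- The monomial endomorphism `x ↦ x^M` of the complex torus `(ℂˣ)ⁿ` attached to an
`n × n` integer matrix `M`: `(x^M)_i = ∏_j (x_j)^(M i j)`. -/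
def monomialPow (n : ℕ) (M : Matrix (Fin n) (Fin n) ℤ) (x : Fin n → ℂˣ) : Fin n → ℂˣ :=
  fun i => ∏ j, (x j) ^ (M i j)

/-- The exponential homomorphism `e : ℂⁿ → (ℂˣ)ⁿ`, `e(v)_j = exp (v_j)`. -/
noncomputable def expTorus (n : ℕ) (v : Fin n → ℂ) : Fin n → ℂˣ :=
  fun j => Units.mk0 (Complex.exp (v j)) (Complex.exp_ne_zero _)

theorem monomialPow_one (n : ℕ) (M : Matrix (Fin n) (Fin n) ℤ) : monomialPow n M 1 = 1 := by
  funext i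
  simp [monomialPow]

theorem monomialPow_mul (n : ℕ) (M : Matrix (Fin n) (Fin n) ℤ) (x y : Fin n → ℂˣ) :
    monomialPow n M (x * y) = monomialPow n M x * monomialPow n M y := by
  funext i
  simp [monomialPow, mul_zpow, Finset.prod_mul_distrib]

/-- The group of fixed points of the monomial endomorphism `x ↦ x^M`. -/
def monomialFixedSubgroup (n : ℕ) (M : Matrix (Fin n) (Fin n) ℤ) : Subgroup (Fin n → ℂˣ) :=
  MonoidHom.eqLocus
    { toFun := monomialPow n M
      map_one' := monomialPow_one n M
      map_mul' := monomialPow_mul n M } (MonoidHom.id _)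

theorem expTorus_zero (n : ℕ) : expTorus n 0 = 1 := by
  funext j
  ext
  simp [expTorus]

theorem expTorus_add (n : ℕ) (v w : Fin n → ℂ) :
    expTorus n (v + w) = expTorus n v * expTorus n w := by
  funext j
  ext
  simp [expTorus, Complex.exp_add]

theorem expTorus_neg (n : ℕ) (v : Fin n → ℂ) : expTorus n (-v) = (expTorus n v)⁻¹ := by
  rw [eq_inv_iff_mul_eq_one, ← expTorus_add, neg_add_cancel, expTorus_zero]

theorem continuous_expTorus (n : ℕ) : Continuous (expTorus n) := by
  refine continuous_pi fun j => Units.continuous_iff.2 ⟨?_, ?_⟩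
  · simp only [Function.comp_def, expTorus, Units.val_mk0]
    fun_prop
  · simp only [expTorus, Units.val_inv_eq_inv_val, Units.val_mk0, ← Complex.exp_neg]
    fun_prop

theorem monomialPow_expTorus (n : ℕ) (M : Matrix (Fin n) (Fin n) ℤ) (v : Fin n → ℂ) :
    monomialPow n M (expTorus n v)
      = expTorus n ((M.map (Int.cast : ℤ → ℂ)).mulVec v) := by
  funext i
  ext
  simp [monomialPow, expTorus, Matrix.mulVec, dotProduct, Complex.exp_sum, Complex.exp_int_mul]

theorem expTorus_log (n : ℕ) (x : Fin n → ℂˣ) :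
    expTorus n (fun j => Complex.log (x j)) = x := by
  funext j
  ext
  simp [expTorus, Complex.exp_log]

/-- The exponential is injective on vectors whose coordinates differ by less than `2π`. -/
theorem eq_of_expTorus_eq {n : ℕ} {v w : Fin n → ℂ} (h : expTorus n v = expTorus n w)
    (hlt : ∀ j, ‖v j - w j‖ < 2 * Real.pi) : v = w := by
  funext j
  have hj : Complex.exp (v j) = Complex.exp (w j) := by
    simpa [expTorus] using congrArg Units.val (congrFun h j)
  obtain ⟨k, hk⟩ := Complex.exp_eq_exp_iff_exists_int.1 hj
  have hn := hlt j
  rw [hk, add_sub_cancel_left] at hn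
  have hπ : (0 : ℝ) < 2 * Real.pi := by positivity
  have hk1 : |(k : ℝ)| < 1 := by
    have : ‖(k : ℂ) * (2 * Real.pi * Complex.I)‖ = |(k : ℝ)| * (2 * Real.pi) := by
      simp [abs_of_pos Real.pi_pos]
    rw [this] at hn
    exact lt_of_mul_lt_mul_right (by linarith) hπ.le
  have hk0 : k = 0 := Int.abs_lt_one_iff.1 (by exact_mod_cast hk1)
  simpa [hk0] using hk

/-- Fixed points of `x ↦ x^M` near the identity are exponentials of `M`-invariant vectors. -/
theorem eventually_mem_expTorus_image (n : ℕ) (M : Matrix (Fin n) (Fin n) ℤ) :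
    ∀ᶠ x in nhds (1 : Fin n → ℂˣ), monomialPow n M x = x →
      x ∈ expTorus n '' {v : Fin n → ℂ | (M.map (Int.cast : ℤ → ℂ)).mulVec v = v} := by
  let L : (Fin n → ℂˣ) → Fin n → ℂ := fun x j => Complex.log (x j)
  have hL : ContinuousAt L 1 := by
    refine continuousAt_pi.2 fun j => ContinuousAt.clog ?_ (by simp)
    exact (Units.continuous_val.comp (continuous_apply j)).continuousAt
  have hL1 : L 1 = 0 := by
    funext j
    simp [L]
  have hev : ∀ᶠ x in nhds (1 : Fin n → ℂˣ), ∀ j,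
      ‖(M.map (Int.cast : ℤ → ℂ)).mulVec (L x) j - L x j‖ < 2 * Real.pi := by
    refine Filter.eventually_all.2 fun j => ?_
    have hlin : Continuous fun v : Fin n → ℂ =>
        ‖(M.map (Int.cast : ℤ → ℂ)).mulVec v j - v j‖ := by
      simp only [Matrix.mulVec, dotProduct]
      fun_prop
    refine (hlin.continuousAt.comp hL).eventually_lt continuousAt_const ?_
    simp [hL1, Real.pi_pos]
  filter_upwards [hev] with x hx hfix
  refine ⟨L x, eq_of_expTorus_eq ?_ hx, expTorus_log n x⟩
  rw [← monomialPow_expTorus, expTorus_log, hfix]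

/-- The exponentials of `M`-invariant vectors, as a subgroup of the fixed-point group. -/
def expInvariantsSubgroup (n : ℕ) (M : Matrix (Fin n) (Fin n) ℤ) :
    Subgroup (monomialFixedSubgroup n M) where
  carrier := {x | (x : Fin n → ℂˣ) ∈
    expTorus n '' {v : Fin n → ℂ | (M.map (Int.cast : ℤ → ℂ)).mulVec v = v}}
  one_mem' := ⟨0, Matrix.mulVec_zero _, expTorus_zero n⟩
  mul_mem' := by
    rintro x y ⟨v, hv, hx⟩ ⟨w, hw, hy⟩
    refine ⟨v + w, ?_, ?_⟩
    · simp only [Set.mem_ofPred_eq] at hv hw ⊢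
      rw [Matrix.mulVec_add, hv, hw]
    · rw [expTorus_add, hx, hy, Subgroup.coe_mul]
  inv_mem' := by
    rintro x ⟨v, hv, hx⟩
    refine ⟨-v, ?_, ?_⟩
    · simp only [Set.mem_ofPred_eq] at hv ⊢
      rw [Matrix.mulVec_neg, hv]
    · rw [expTorus_neg, hx, Subgroup.coe_inv]

theorem isOpen_expInvariantsSubgroup (n : ℕ) (M : Matrix (Fin n) (Fin n) ℤ) :
    IsOpen (expInvariantsSubgroup n M : Set (monomialFixedSubgroup n M)) := by
  refine Subgroup.isOpen_of_mem_nhds _ (g := 1) ?_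
  have h := (continuous_subtype_val (p := (· ∈ monomialFixedSubgroup n M))).tendsto 1
    |>.eventually (eventually_mem_expTorus_image n M)
  filter_upwards [h] with x hx
  exact hx x.2

/-- For an `n × n` integer matrix `M`, the connected component of the identity in the
fixed-point group `H = {x ∈ (ℂˣ)ⁿ : x^M = x}` is exactly `e(V)`, where
`V = {v ∈ ℂⁿ : M v = v}` is the space of `M`-invariants in the Lie algebra. -/
theorem identity_component_of_monomial_fixed_group_eq_exp_invariants
    (n : ℕ) (M : Matrix (Fin n) (Fin n) ℤ) :
    connectedComponentIn {x : Fin n → ℂˣ | monomialPow n M x = x} 1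
      = expTorus n '' {v : Fin n → ℂ | (M.map (Int.cast : ℤ → ℂ)).mulVec v = v} := by
  apply Set.Subset.antisymm
  · have hopen := isOpen_expInvariantsSubgroup n M
    have hclopen : IsClopen (expInvariantsSubgroup n M : Set (monomialFixedSubgroup n M)) :=
      ⟨Subgroup.isClosed_of_isOpen _ hopen, hopen⟩
    have hsub := hclopen.connectedComponent_subset (one_mem (expInvariantsSubgroup n M))
    rw [connectedComponentIn_eq_image (F := {x : Fin n → ℂˣ | monomialPow n M x = x})
      (monomialPow_one n M)]
    rintro _ ⟨x, hx, rfl⟩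
    exact hsub hx
  · have hV : Convex ℝ {v : Fin n → ℂ | (M.map (Int.cast : ℤ → ℂ)).mulVec v = v} := by
      intro v hv w hw a b _ _ _
      simp only [Set.mem_ofPred_eq] at hv hw ⊢
      rw [Matrix.mulVec_add, Matrix.mulVec_smul, Matrix.mulVec_smul, hv, hw]
    have hconn := hV.isPreconnected.image _ (continuous_expTorus n).continuousOn
    refine hconn.subset_connectedComponentIn
      ⟨0, Matrix.mulVec_zero _, expTorus_zero n⟩ ?_
    rintro _ ⟨v, hv, rfl⟩
    simp only [Set.mem_ofPred_eq] at hv ⊢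
    rw [monomialPow_expTorus, hv]
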